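/- Let H and G be additive Krull-Schmidt categories and (S,T) an adjoint pair with T∘S = ⊕_{i∈I} E_i for self-equivalences E_i of H, with E_{i₀} = id_H, and suppose each E_i lifts to a self-equivalence Ê_i of G satisfying S∘E_i ≅ Ê_i∘S and T∘Ê_i ≅ E_i∘T, and Ê_i(V) ≅ V for every object V in the image of S. Then for any indecomposable object W of H such that E_j W ≅ W only when j = i₀, the object S(W) is indecomposable in G. -/

import Mathlib

open CategoryTheory CategoryTheory.Limits

universe v u v' u'

/-- A (pre)additive category with finite biproducts is Krull-Schmidt if every object is a
finite biproduct of objects with local endomorphism rings. -/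
def IsKrullSchmidt (C : Type u) [Category.{v} C] [Preadditive C] [HasFiniteBiproducts C] :
    Prop :=
  ∀ X : C, ∃ (n : ℕ) (f : Fin n → C),
    (∀ i, IsLocalRing (End (f i))) ∧ Nonempty (X ≅ ⨁ f)

variable {H : Type u} {G : Type u'} [Category.{v} H] [Category.{v'} G]
variable [Preadditive H] [HasFiniteBiproducts H] [Preadditive G] [HasFiniteBiproducts G]

instance : HasFiniteProducts (H ⥤ H) := ⟨fun _ => inferInstance⟩

attribute [local instance] HasFiniteBiproducts.of_hasFiniteProducts
attribute [local instance] hasBinaryBiproducts_of_finite_biproducts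

/-!
We show that `End (S W)` is a local ring, using the Jacobson radical of a preadditive category, the
ideal of those `f : X ⟶ Y` such that `𝟙 X - f ≫ g` is invertible for every `g`.

The transpose `q : W ⟶ T S W` of an endomorphism `φ` of `S W` has components `W ⟶ E_j W`, which are
radical for `j ≠ i₀` because `W` and `E_j W` are then non-isomorphic objects with local endomorphism
rings. If the component at `i₀` is radical too, then so is `T φ = T S q ≫ T ε`, because `T S` is the
sum of the radical-preserving functors `E_j`; hence `𝟙 - T φ = T (𝟙 - φ)` is invertible, and so is
`𝟙 - φ`. Otherwise the component is an isomorphism, so the component at `i₀` of the unit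
`W ⟶ T S W` factors through it, and for some endomorphism `u` of `W` the transpose of `𝟙 - S u ≫ φ`
vanishes at `i₀`. By the first case `S u ≫ φ` is invertible, so `φ` is a split epimorphism. The same
argument applied to a section of `φ` shows that `φ` is invertible.
-/

section HomRadical

variable {C D : Type*} [Category* C] [Category* D] [Preadditive C] [Preadditive D] {X Y Z : C}

theorem isIso_id_sub_comp_swap {f : X ⟶ Y} {g : Y ⟶ X} (h : IsIso (𝟙 X - f ≫ g)) :
    IsIso (𝟙 Y - g ≫ f) := by
  obtain ⟨a, hl, hr⟩ := h.out
  rw [Preadditive.sub_comp, Category.id_comp, Category.assoc] at hl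
  rw [Preadditive.comp_sub, Category.comp_id] at hr
  refine ⟨𝟙 Y + g ≫ a ≫ f, ?_, ?_⟩
  · calc (𝟙 Y - g ≫ f) ≫ (𝟙 Y + g ≫ a ≫ f)
        = 𝟙 Y - g ≫ f + g ≫ (a - f ≫ g ≫ a) ≫ f := by simp
      _ = 𝟙 Y := by simp [hl]
  · calc (𝟙 Y + g ≫ a ≫ f) ≫ (𝟙 Y - g ≫ f)
        = 𝟙 Y - g ≫ f + g ≫ (a - a ≫ f ≫ g) ≫ f := by simp; abel
      _ = 𝟙 Y := by simp [hr]

/-- The Jacobson radical of a preadditive category, as a subgroup of each group of morphisms. It is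
a two-sided ideal although the defining condition is one-sided. -/
def homRadical (X Y : C) : AddSubgroup (X ⟶ Y) where
  carrier := {f | ∀ g : Y ⟶ X, IsIso (𝟙 X - f ≫ g)}
  zero_mem' g := by simpa using IsIso.id X
  neg_mem' {f} hf g := by simpa using hf (-g)
  add_mem' {f f'} hf hf' g := by
    have := hf g
    have := hf' (g ≫ inv (𝟙 X - f ≫ g))
    have h : 𝟙 X - (f + f') ≫ g =
        (𝟙 X - f' ≫ g ≫ inv (𝟙 X - f ≫ g)) ≫ (𝟙 X - f ≫ g) := by
      rw [Preadditive.sub_comp (𝟙 X)]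
      simp [sub_sub, -Preadditive.comp_sub]
    rw [h]
    infer_instance

theorem mem_homRadical_iff {f : X ⟶ Y} :
    f ∈ homRadical X Y ↔ ∀ g : Y ⟶ X, IsIso (𝟙 X - f ≫ g) :=
  Iff.rfl

theorem comp_mem_homRadical_of_left {f : X ⟶ Y} (hf : f ∈ homRadical X Y) (g : Y ⟶ Z) :
    f ≫ g ∈ homRadical X Z := fun h => by
  simpa using hf (g ≫ h)

theorem comp_mem_homRadical_of_right (f : X ⟶ Y) {g : Y ⟶ Z} (hg : g ∈ homRadical Y Z) :
    f ≫ g ∈ homRadical X Z := fun h => by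
  simpa using isIso_id_sub_comp_swap (f := g ≫ h) (by simpa using hg (h ≫ f))

theorem isZero_of_id_mem_homRadical (h : 𝟙 X ∈ homRadical X X) : IsZero X := by
  have : IsIso (0 : X ⟶ X) := by simpa using h (𝟙 X)
  exact IsZero.of_mono_zero X X

theorem map_mem_homRadical (F : C ⥤ D) [F.Full] [F.Additive] {f : X ⟶ Y}
    (hf : f ∈ homRadical X Y) : F.map f ∈ homRadical (F.obj X) (F.obj Y) := fun g => by
  obtain ⟨g, rfl⟩ := F.map_surjective g
  have := hf g
  rw [← F.map_comp, ← F.map_id, ← F.map_sub]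
  infer_instance

end HomRadical

section LocalEnd

variable {C D : Type*} [Category* C] [Category* D] [Preadditive C] [Preadditive D] {X Y : C}

theorem isIso_or_isIso_id_sub [IsLocalRing (End X)] (f : X ⟶ X) : IsIso f ∨ IsIso (𝟙 X - f) :=
  (IsLocalRing.isUnit_or_isUnit_of_add_one (R := End X) (add_sub_cancel f (𝟙 X))).imp
    (isUnit_iff_isIso f).1 (isUnit_iff_isIso (𝟙 X - f)).1

theorem isLocalRing_end_of_isIso_or_isIso_id_sub (hX : ¬IsZero X)
    (h : ∀ f : X ⟶ X, IsIso f ∨ IsIso (𝟙 X - f)) : IsLocalRing (End X) := by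
  have : Nontrivial (End X) := ⟨𝟙 X, 0, fun h => hX ((IsZero.iff_id_eq_zero X).2 h)⟩
  exact .of_isUnit_or_isUnit_one_sub_self fun f =>
    (h f).imp (isUnit_iff_isIso f).2 (isUnit_iff_isIso (1 - f)).2

theorem not_isZero_of_isLocalRing_end [IsLocalRing (End X)] : ¬IsZero X := fun h =>
  zero_ne_one (α := End X) (h.eq_of_src _ _)

theorem isLocalRing_end_map (F : C ⥤ D) [F.Full] [F.Additive] [IsLocalRing (End X)]
    (hX : ¬IsZero (F.obj X)) : IsLocalRing (End (F.obj X)) := by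
  refine isLocalRing_end_of_isIso_or_isIso_id_sub hX fun f => ?_
  obtain ⟨f, rfl⟩ := F.map_surjective f
  rw [← F.map_id, ← F.map_sub]
  rcases isIso_or_isIso_id_sub f with _ | _
  · exact .inl inferInstance
  · exact .inr inferInstance

theorem isLocalRing_end_of_iso [IsLocalRing (End X)] (e : X ≅ Y) : IsLocalRing (End Y) := by
  refine isLocalRing_end_of_isIso_or_isIso_id_sub
    (fun h => not_isZero_of_isLocalRing_end (h.of_iso e)) fun f => ?_
  have h : 𝟙 X - e.hom ≫ f ≫ e.inv = e.hom ≫ (𝟙 Y - f) ≫ e.inv := by simp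
  simpa only [h, isIso_comp_left_iff, isIso_comp_right_iff] using
    isIso_or_isIso_id_sub (e.hom ≫ f ≫ e.inv)

theorem isSplitMono_of_notMem_homRadical [IsLocalRing (End X)] {f : X ⟶ Y}
    (hf : f ∉ homRadical X Y) : IsSplitMono f := by
  simp only [mem_homRadical_iff, not_forall] at hf
  obtain ⟨g, hg⟩ := hf
  have := (isIso_or_isIso_id_sub (f ≫ g)).resolve_right hg
  exact ⟨⟨g ≫ inv (f ≫ g), by simp [← Category.assoc]⟩⟩

theorem isIso_of_isSplitMono_of_isLocalRing_end [IsLocalRing (End Y)] (hX : ¬IsZero X)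
    (f : X ⟶ Y) [IsSplitMono f] : IsIso f := by
  rcases isIso_or_isIso_id_sub (retraction f ≫ f) with h | h
  · have := epi_of_epi (retraction f) f
    exact isIso_of_epi_of_isSplitMono f
  · have hf : f ≫ (𝟙 Y - retraction f ≫ f) = 0 := by simp
    exact absurd (IsZero.of_mono_eq_zero f (zero_of_comp_mono _ hf)) hX

theorem isIso_of_notMem_homRadical [IsLocalRing (End X)] [IsLocalRing (End Y)] {f : X ⟶ Y}
    (hf : f ∉ homRadical X Y) : IsIso f :=
  have := isSplitMono_of_notMem_homRadical hf
  isIso_of_isSplitMono_of_isLocalRing_end not_isZero_of_isLocalRing_end f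

end LocalEnd

section Indecomposable

variable {C : Type*} [Category* C] [Preadditive C]

theorem indecomposable_of_isLocalRing_end [HasBinaryBiproducts C] {X : C}
    (hX : IsLocalRing (End X)) : Indecomposable X := by
  refine ⟨not_isZero_of_isLocalRing_end, fun Y Z e => or_iff_not_imp_left.2 fun hY => ?_⟩
  have := isIso_of_isSplitMono_of_isLocalRing_end hY (biprod.inl ≫ e.inv)
  have : IsIso (e.hom ≫ (biprod.fst : Y ⊞ Z ⟶ Y)) :=
    .of_isIso_fac_left (f := biprod.inl ≫ e.inv) (h := 𝟙 Y) (by simp)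
  have hZ : (biprod.inr ≫ e.inv) ≫ e.hom ≫ (biprod.fst : Y ⊞ Z ⟶ Y) = 0 := by simp
  exact IsZero.of_mono_eq_zero _ (zero_of_comp_mono _ hZ)

/-- Splits off the first summand of a finite biproduct. -/
noncomputable def biproductFinSuccIso [HasFiniteBiproducts C] {n : ℕ} (f : Fin (n + 1) → C) :
    ⨁ f ≅ f 0 ⊞ ⨁ fun j : Fin n => f j.succ where
  hom := biprod.lift (biproduct.π f 0) (biproduct.lift fun j => biproduct.π f j.succ)
  inv := biprod.desc (biproduct.ι f 0) (biproduct.desc fun j => biproduct.ι f j.succ)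
  hom_inv_id := by
    rw [biprod.lift_desc, biproduct.lift_desc, ← biproduct.total, Fin.sum_univ_succ]
  inv_hom_id := by
    ext <;> simp [biproduct.ι_π, (Fin.succ_ne_zero _).symm]

theorem isLocalRing_end_of_indecomposable [HasFiniteBiproducts C] (hC : IsKrullSchmidt C) {X : C}
    (hX : Indecomposable X) : IsLocalRing (End X) := by
  obtain ⟨n, f, hf, ⟨e⟩⟩ := hC X
  cases n with
  | zero => exact absurd ((IsZero.iff_id_eq_zero _).2 (by ext j; exact j.elim0) |>.of_iso e) hX.1
  | succ n =>
    have := hf 0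
    let e' := e ≪≫ biproductFinSuccIso f
    have hrest := (hX.2 _ _ e').resolve_left not_isZero_of_isLocalRing_end
    exact isLocalRing_end_of_iso (isoBiprodZero hrest ≪≫ e'.symm)

end Indecomposable

section BiproductOfFunctors

variable {C D : Type*} {I : Type} [Category* C] [Category* D] [Preadditive D]

theorem additive_of_retract [Preadditive C] {F E : C ⥤ D} [F.Additive] (i : E ⟶ F) (p : F ⟶ E)
    (h : i ≫ p = 𝟙 E) : E.Additive where
  map_add {X Y f g} := by
    have hE (k : X ⟶ Y) : E.map k = i.app X ≫ F.map k ≫ p.app Y := by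
      rw [p.naturality, ← NatTrans.comp_app_assoc, h, NatTrans.id_app, Category.id_comp]
    rw [hE, hE, hE, F.map_add, Preadditive.add_comp, Preadditive.comp_add]

variable {F : C ⥤ D} {E : I → C ⥤ D} [HasBiproduct E]

theorem sum_biproduct_π_app_comp_ι_app [Fintype I] (iso : F ≅ ⨁ E) (X : C) :
    ∑ j, (iso.hom ≫ biproduct.π E j).app X ≫ (biproduct.ι E j ≫ iso.inv).app X =
      𝟙 (F.obj X) := by
  have htotal : ∑ j, (biproduct.π E j).app X ≫ (biproduct.ι E j).app X = 𝟙 ((⨁ E).obj X) := by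
    simpa only [NatTrans.app_sum, NatTrans.comp_app, NatTrans.id_app] using
      congr_app (biproduct.total (f := E)) X
  calc _ = iso.hom.app X ≫ (∑ j, (biproduct.π E j).app X ≫ (biproduct.ι E j).app X) ≫
        iso.inv.app X := by
          simp only [NatTrans.comp_app, Category.assoc, Preadditive.comp_sum, Preadditive.sum_comp]
    _ = 𝟙 (F.obj X) := by rw [htotal, Category.id_comp, Iso.hom_inv_id_app]

theorem mem_homRadical_of_forall_comp_π [Finite I] (iso : F ≅ ⨁ E) {X : C} {Y : D} {f : Y ⟶ F.obj X}
    (hf : ∀ j, f ≫ (iso.hom ≫ biproduct.π E j).app X ∈ homRadical Y ((E j).obj X)) :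
    f ∈ homRadical Y (F.obj X) := by
  have := Fintype.ofFinite I
  rw [← Category.comp_id f, ← sum_biproduct_π_app_comp_ι_app iso, Preadditive.comp_sum]
  refine sum_mem fun j _ => ?_
  rw [← Category.assoc]
  exact comp_mem_homRadical_of_left (hf j) _

theorem map_mem_homRadical_of_iso_biproduct [Preadditive C] [Finite I] (iso : F ≅ ⨁ E)
    [∀ j, (E j).Full] [∀ j, (E j).Additive] {X Y : C} {f : X ⟶ Y} (hf : f ∈ homRadical X Y) :
    F.map f ∈ homRadical (F.obj X) (F.obj Y) :=
  mem_homRadical_of_forall_comp_π iso fun j => by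
    rw [NatTrans.naturality]
    exact comp_mem_homRadical_of_right _ (map_mem_homRadical (E j) hf)

end BiproductOfFunctors

section Adjunction

variable {C D : Type*} [Category* C] [Category* D] {S : C ⥤ D} {T : D ⥤ C}

-- Postcomposition with `f` is bijective on morphisms out of an object `S.obj Z`.
theorem isIso_of_isIso_map_of_adjunction (adj : S ⊣ T) {X Y : C} (f : S.obj X ⟶ S.obj Y)
    [IsIso (T.map f)] : IsIso f := by
  let g : S.obj Y ⟶ S.obj X := (adj.homEquiv _ _).symm (adj.unit.app Y ≫ inv (T.map f))
  have hgf : g ≫ f = 𝟙 _ := by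
    simp [g, ← adj.homEquiv_naturality_right_symm, ← adj.homEquiv_id]
  refine ⟨g, (adj.homEquiv _ _).injective ?_, hgf⟩
  rw [← cancel_mono (T.map f), ← adj.homEquiv_naturality_right, ← adj.homEquiv_naturality_right,
    Category.assoc, hgf, Category.comp_id, Category.id_comp]

variable [Preadditive C] {I : Type} [Finite I] {E : I → C ⥤ C} [HasBiproduct E]
  [∀ j, (E j).Full] [∀ j, (E j).Additive]

theorem map_mem_homRadical_of_homEquiv_mem (adj : S ⊣ T) (iso : S ⋙ T ≅ ⨁ E) {X : C} {Y : D}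
    {f : S.obj X ⟶ Y} (hf : adj.homEquiv X Y f ∈ homRadical X (T.obj Y)) :
    T.map f ∈ homRadical (T.obj (S.obj X)) (T.obj Y) := by
  have hfac : T.map f = (S ⋙ T).map (adj.homEquiv X Y f) ≫ T.map (adj.counit.app Y) := by
    rw [Functor.comp_map, ← T.map_comp]
    exact congrArg T.map
      (((adj.homEquiv X Y).symm_apply_apply f).symm.trans (adj.homEquiv_counit _ _ _))
  rw [hfac]
  exact comp_mem_homRadical_of_left (map_mem_homRadical_of_iso_biproduct iso hf) _

theorem homEquiv_notMem_homRadical_of_isSplitMono (adj : S ⊣ T) (iso : S ⋙ T ≅ ⨁ E)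
    {X : C} {Y : D} (hX : ¬IsZero (T.obj (S.obj X))) (f : S.obj X ⟶ Y) [IsSplitMono f] :
    adj.homEquiv X Y f ∉ homRadical X (T.obj Y) := fun hf => by
  refine hX (isZero_of_id_mem_homRadical ?_)
  rw [← T.map_id, ← IsSplitMono.id f, T.map_comp]
  exact comp_mem_homRadical_of_left (map_mem_homRadical_of_homEquiv_mem adj iso hf) _

theorem isIso_id_sub_of_homEquiv_mem_homRadical [Preadditive D] [T.Additive] (adj : S ⊣ T)
    (iso : S ⋙ T ≅ ⨁ E) {X : C} {f : S.obj X ⟶ S.obj X}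
    (hf : adj.homEquiv X _ f ∈ homRadical X (T.obj (S.obj X))) : IsIso (𝟙 (S.obj X) - f) := by
  have : IsIso (T.map (𝟙 (S.obj X) - f)) := by
    simpa using map_mem_homRadical_of_homEquiv_mem adj iso hf (𝟙 _)
  exact isIso_of_isIso_map_of_adjunction adj _

end Adjunction

section TrivialInertia

variable {C D : Type*} [Category* C] [Category* D] [Preadditive C] [Preadditive D]
  {I : Type} [Finite I] {E : I → C ⥤ C} [HasBiproduct E] [∀ j, (E j).Full]
  [∀ j, (E j).Additive] {i₀ : I} {W : C} [IsLocalRing (End W)]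

theorem isIso_comp_π_of_notMem_homRadical {F : C ⥤ C} (iso : F ≅ ⨁ E)
    (hWfix : ∀ j, Nonempty ((E j).obj W ≅ W) → j = i₀) {q : W ⟶ F.obj W}
    (hq : q ∉ homRadical W (F.obj W)) : IsIso (q ≫ (iso.hom ≫ biproduct.π E i₀).app W) := by
  obtain ⟨j, hj⟩ := not_forall.1 fun h => hq (mem_homRadical_of_forall_comp_π iso h)
  have hEW : ¬IsZero ((E j).obj W) := fun h => hj (by rw [h.eq_of_tgt (q ≫ _) 0]; exact zero_mem _)
  have := isLocalRing_end_map (E j) hEW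
  have := isIso_of_notMem_homRadical hj
  obtain rfl := hWfix j ⟨(asIso (q ≫ (iso.hom ≫ biproduct.π E j).app W)).symm⟩
  exact this

variable {S : C ⥤ D} {T : D ⥤ C} [T.Additive]

theorem isSplitEpi_of_homEquiv_notMem_homRadical (adj : S ⊣ T) (iso : S ⋙ T ≅ ⨁ E)
    (hWfix : ∀ j, Nonempty ((E j).obj W ≅ W) → j = i₀)
    {f : S.obj W ⟶ S.obj W} (hf : adj.homEquiv W _ f ∉ homRadical W (T.obj (S.obj W))) :
    IsSplitEpi f := by
  let π : T.obj (S.obj W) ⟶ (E i₀).obj W := (iso.hom ≫ biproduct.π E i₀).app W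
  have : IsIso (adj.homEquiv W _ f ≫ π) := isIso_comp_π_of_notMem_homRadical iso hWfix hf
  let u : W ⟶ W := (adj.homEquiv W _ (𝟙 _) ≫ π) ≫ inv (adj.homEquiv W _ f ≫ π)
  have hu : adj.homEquiv W _ (𝟙 _ - S.map u ≫ f) ≫ π = 0 := by
    have := adj.left_adjoint_additive
    rw [← adj.homAddEquiv_apply, map_sub, adj.homAddEquiv_apply, adj.homAddEquiv_apply,
      adj.homEquiv_naturality_left]
    simp [u]
  have hmem : adj.homEquiv W _ (𝟙 _ - S.map u ≫ f) ∈ homRadical W (T.obj (S.obj W)) := by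
    by_contra hmem
    have := isIso_comp_π_of_notMem_homRadical iso hWfix hmem
    exact not_isZero_of_isLocalRing_end (IsZero.of_mono_eq_zero _ hu)
  have : IsIso (S.map u ≫ f) := by
    simpa using isIso_id_sub_of_homEquiv_mem_homRadical adj iso hmem
  exact ⟨⟨inv (S.map u ≫ f) ≫ S.map u, by simp⟩⟩

end TrivialInertia

theorem clifford_trivial_inertia_general {C D : Type*} [Category* C] [Category* D] [Preadditive C]
    [Preadditive D] {S : C ⥤ D} {T : D ⥤ C} [T.Additive] (adj : S ⊣ T) {I : Type} [Finite I]
    {E : I → C ⥤ C} [HasBiproduct E] [∀ j, (E j).Full] {i₀ : I} (iso : S ⋙ T ≅ ⨁ E) {W : C}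
    [IsLocalRing (End W)] (hWfix : ∀ j, Nonempty ((E j).obj W ≅ W) ↔ j = i₀) :
    IsLocalRing (End (S.obj W)) := by
  have := adj.left_adjoint_additive
  have (j : I) : (E j).Additive :=
    additive_of_retract (biproduct.ι E j ≫ iso.inv) (iso.hom ≫ biproduct.π E j) (by simp)
  have hTSW : ¬IsZero (T.obj (S.obj W)) := fun h => by
    obtain ⟨e⟩ := (hWfix i₀).2 rfl
    have hmono : Mono (((evaluation C C).obj W).map (biproduct.ι E i₀ ≫ iso.inv)) := inferInstance
    have : Mono ((biproduct.ι E i₀ ≫ iso.inv).app W) := hmono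
    exact not_isZero_of_isLocalRing_end
      ((IsZero.of_mono ((biproduct.ι E i₀ ≫ iso.inv).app W) h).of_iso e.symm)
  refine isLocalRing_end_of_isIso_or_isIso_id_sub (fun h => hTSW (T.map_isZero h)) fun f => ?_
  by_cases hf : adj.homEquiv W _ f ∈ homRadical W (T.obj (S.obj W))
  · exact .inr (isIso_id_sub_of_homEquiv_mem_homRadical adj iso hf)
  · left
    have splitEpi {g : S.obj W ⟶ S.obj W} :=
      isSplitEpi_of_homEquiv_notMem_homRadical adj iso (fun j => (hWfix j).1) (f := g)
    have := splitEpi hf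
    have := splitEpi (homEquiv_notMem_homRadical_of_isSplitMono adj iso hTSW (section_ f))
    have := isIso_of_mono_of_isSplitEpi (section_ f)
    exact .of_isIso_fac_left (IsSplitEpi.id f)

/-- Let `H` and `G` be additive Krull-Schmidt categories and `(S,T)` an
adjoint pair with `T∘S ≅ ⊕_{i∈I} E_i` for self-equivalences `E_i` of `H`, with
`E_{i₀} = id_H`, and suppose each `E_i` lifts to a self-equivalence `Ê_i` of `G`
satisfying `S∘E_i ≅ Ê_i∘S` and `T∘Ê_i ≅ E_i∘T`, and `Ê_i(V) ≅ V` for every object `V`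
in the image of `S`.  Then for any indecomposable object `W` of `H` such that
`E_j W ≅ W` only when `j = i₀`, the object `S(W)` is indecomposable in `G`. -/
theorem clifford_trivial_inertia
    (hH : IsKrullSchmidt H) (hG : IsKrullSchmidt G)
    (S : H ⥤ G) (T : G ⥤ H) [S.Additive] [T.Additive] (adj : S ⊣ T)
    {I : Type} [Fintype I] (E : I → H ⥤ H) (i₀ : I)
    (hE0 : E i₀ = 𝟭 H) (hEq : ∀ i, (E i).IsEquivalence)
    (iso : S ⋙ T ≅ ⨁ E)
    (Ehat : I → G ⥤ G) (hEhatEq : ∀ i, (Ehat i).IsEquivalence)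
    (hS : ∀ i, Nonempty (E i ⋙ S ≅ S ⋙ Ehat i))
    (hT : ∀ i, Nonempty (Ehat i ⋙ T ≅ T ⋙ E i))
    (hfixim : ∀ (i : I) (X : H), Nonempty ((Ehat i).obj (S.obj X) ≅ S.obj X))
    (W : H) (hW : Indecomposable W)
    (hWfix : ∀ j : I, Nonempty ((E j).obj W ≅ W) ↔ j = i₀) :
    Indecomposable (S.obj W) := by
  have := isLocalRing_end_of_indecomposable hH hW
  exact indecomposable_of_isLocalRing_end (clifford_trivial_inertia_general adj iso hWfix)
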